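/- arXiv:2605.07664 — 5 statements merged into one kernel-verified Lean document; each statement's English description precedes it below -/
import Mathlib

section
/- Let T be a finite tree, let c be a subtree core of T, and let v be a vertex of T with v ≠ c. For each neighbour u of v, let T_u denote the component of T − v containing u. Suppose w is a neighbour of v such that N(T_w, w) = max over all neighbours u of v of N(T_u, u). Then w lies in the component of T − v that contains c. In particular, N_c(T,v) = M(T,v). -/
/-- A subtree of a graph: a nonempty set of vertices inducing a connected subgraph. -/
def IsSubtree {V : Type*} (G : SimpleGraph V) (S : Finset V) : Prop :=
  S.Nonempty ∧ (G.induce (S : Set V)).Connected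

/-- `N(T,v)`: the number of subtrees containing the vertex `v`. -/
noncomputable def numSubtreesContaining {V : Type*} [Fintype V] (G : SimpleGraph V) (v : V) : ℕ :=
  Nat.card {S : Finset V // IsSubtree G S ∧ v ∈ S}

/-- The number of subtrees containing `v` but not `u`. -/
noncomputable def numSubtreesWithWithout {V : Type*} [Fintype V] (G : SimpleGraph V) (v u : V) : ℕ :=
  Nat.card {S : Finset V // IsSubtree G S ∧ v ∈ S ∧ u ∉ S}

/-- `M(T,v)`: the minimum, over all neighbours `u` of `v`, of the number of subtrees
containing `v` but not `u`. -/
noncomputable def subtreeM {V : Type*} [Fintype V] (G : SimpleGraph V) (v : V) : ℕ :=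
  sInf ((fun u => numSubtreesWithWithout G v u) '' (G.neighborSet v))

/-- `N_v(T,w)`: the number of subtrees `S` containing `w` such that for all `u ∈ S`
the unique path from `u` to `v` passes through `w`. -/
noncomputable def numSubtreesGrowingAway {V : Type*} [Fintype V] (G : SimpleGraph V)
    (v w : V) : ℕ :=
  Nat.card {S : Finset V // IsSubtree G S ∧ w ∈ S ∧
    ∀ u ∈ S, ∀ p : G.Walk u v, p.IsPath → w ∈ p.support}

/-!
Write `f(v,u)` for the number of subtrees containing `v` but not `u`. The subtrees containing both
`u` and `v` contribute equally to `N(u)` and `N(v)`, so `N(u) < N(v)` exactly when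
`f(u,v) < f(v,u)`. Along a path `a, b, d`, adding `b` to a subtree shows `f(a,b) < f(b,d)`, so a
strict drop of `N` on the first edge of a path persists along the whole path. If `c` were not in
the branch at `v` through `w`, the path from `v` to `c` would start with some `u ≠ w`, and
`f(u,v) ≤ f(w,v) < f(v,u)` would make `N` drop strictly from `v` to `c`.

Cutting subtrees at an edge `vu` gives `N(v) = f(v,u) (f(u,v) + 1)`. As the left side does not
depend on `u`, a maximizer `w` of `f(·,v)` among the neighbours of `v` is a minimizer of `f(v,·)`;
and once `c` lies beyond `w`, the subtrees growing away from `c` at `v` are those avoiding `w`.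
-/

open SimpleGraph

section Branch

variable {V : Type*} {G : SimpleGraph V} {u v x : V}

/-- The branch at `v` away from `u`: the vertices joined to `v` by a walk avoiding `u`. For
adjacent `v` and `u` in a tree this is the component `T_v` of `T - u`, expressed through walks of
the whole graph. -/
def branch (G : SimpleGraph V) (v u : V) : Set V :=
  {x | ∃ p : G.Walk x v, u ∉ p.support}

theorem self_mem_branch (hvu : v ≠ u) : v ∈ branch G v u :=
  ⟨.nil, by simpa using hvu.symm⟩

theorem notMem_branch (v u : V) : u ∉ branch G v u :=
  fun ⟨p, hp⟩ => hp p.start_mem_support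

theorem mem_branch_or_mem_branch (hvu : v ≠ u) (hx : G.Reachable x v) :
    x ∈ branch G v u ∨ x ∈ branch G u v := by
  classical
  obtain ⟨p, hp⟩ := hx.exists_isPath
  by_cases hu : u ∈ p.support
  · exact .inr ⟨p.takeUntil u hu, Walk.endpoint_notMem_support_takeUntil hp hu hvu⟩
  · exact .inl ⟨p, hu⟩

theorem disjoint_branch (hG : G.IsAcyclic) (hvu : G.Adj v u) :
    Disjoint (branch G v u) (branch G u v) := by
  refine Set.disjoint_left.2 fun x ⟨p, hp⟩ ⟨q, hq⟩ => ?_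
  have hbridge := isAcyclic_iff_forall_adj_isBridge.1 hG hvu
  have hmem := isBridge_iff_forall_walk_mem_edges.1 hbridge (p.reverse.append q)
  rw [Walk.edges_append, Walk.edges_reverse, List.mem_append, List.mem_reverse] at hmem
  exact hmem.elim (fun h => hp (p.snd_mem_support_of_mem_edges h))
    (fun h => hq (q.fst_mem_support_of_mem_edges h))

theorem reachable_induce_of_mem_branch (hvu : v ≠ u) (hxu : x ≠ u) (hx : x ∈ branch G v u) :
    (G.induce {y : V | y ≠ u}).Reachable ⟨v, hvu⟩ ⟨x, hxu⟩ := by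
  obtain ⟨p, hp⟩ := hx
  exact ⟨(p.induce {y : V | y ≠ u} fun _ hy hyu => hp (hyu ▸ hy)).reverse⟩

end Branch

section IsSubtree

variable {V : Type*} {G : SimpleGraph V} {S R : Finset V} {u v x y : V}

theorem isSubtree_singleton (G : SimpleGraph V) (v : V) : IsSubtree G {v} := by
  refine ⟨Finset.singleton_nonempty v, ?_⟩
  rw [Finset.coe_singleton]
  exact Connected.of_subsingleton

namespace IsSubtree

theorem exists_isPath (hS : IsSubtree G S) (hx : x ∈ S) (hy : y ∈ S) :
    ∃ p : G.Walk x y, p.IsPath ∧ ∀ z ∈ p.support, z ∈ S := by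
  obtain ⟨p, hp⟩ := (hS.2.preconnected ⟨x, hx⟩ ⟨y, hy⟩).exists_isPath
  refine ⟨p.map (Embedding.induce _).toHom, hp.map Subtype.val_injective, fun z hz => ?_⟩
  obtain ⟨z', -, rfl⟩ := List.mem_map.1 (Walk.support_map _ p ▸ hz)
  exact z'.2

theorem subset_branch (hS : IsSubtree G S) (hv : v ∈ S) (hu : u ∉ S) :
    (S : Set V) ⊆ branch G v u := fun _ hx =>
  let ⟨p, _, hpS⟩ := hS.exists_isPath hx hv
  ⟨p, fun hup => hu (hpS u hup)⟩

theorem union_of_adj [DecidableEq V] (hS : IsSubtree G S) (hR : IsSubtree G R) (hv : v ∈ S)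
    (hu : u ∈ R) (hvu : G.Adj v u) : IsSubtree G (S ∪ R) := by
  refine ⟨hS.1.mono Finset.subset_union_left, ?_⟩
  rw [Finset.coe_union]
  exact connected_induce_union hS.2.preconnected hR.2.preconnected hv hu hvu

theorem insert_of_adj [DecidableEq V] (hS : IsSubtree G S) (hv : v ∈ S) (hvu : G.Adj v u) :
    IsSubtree G (insert u S) := by
  rw [Finset.insert_eq, Finset.union_comm]
  exact hS.union_of_adj (isSubtree_singleton G u) hv (Finset.mem_singleton_self u) hvu

theorem notMem_of_adj_of_adj (hG : G.IsAcyclic) (hS : IsSubtree G S) {a b d : V} (ha : a ∈ S)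
    (hb : b ∉ S) (hab : G.Adj a b) (hbd : G.Adj b d) (had : a ≠ d) : d ∉ S := fun hd =>
  Set.disjoint_left.1 (disjoint_branch hG hab) (hS.subset_branch ha hb hd)
    ⟨hbd.symm.toWalk, by simp [hab.ne, had]⟩

theorem filter_mem_branch (hG : G.IsAcyclic) (hS : IsSubtree G S) (hv : v ∈ S)
    (hvu : G.Adj v u) [DecidablePred (· ∈ branch G v u)] :
    IsSubtree G {x ∈ S | x ∈ branch G v u} := by
  classical
  have hvF : v ∈ S.filter (· ∈ branch G v u) :=
    Finset.mem_filter.2 ⟨hv, self_mem_branch hvu.ne⟩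
  refine ⟨⟨v, hvF⟩, induce_connected_of_patches v hvF fun {x} hxF => ?_⟩
  obtain ⟨hx, hxb⟩ := Finset.mem_filter.1 hxF
  obtain ⟨p, hp, hpS⟩ := hS.exists_isPath hx hv
  have hup : u ∉ p.support := fun hu => Set.disjoint_left.1 (disjoint_branch hG hvu) hxb
    ⟨p.takeUntil u hu, Walk.endpoint_notMem_support_takeUntil hp hu hvu.ne⟩
  have hpb : ∀ y ∈ p.support, y ∈ branch G v u := fun y hy =>
    ⟨p.dropUntil y hy, fun h => hup (p.support_dropUntil_subset_support hy h)⟩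
  exact ⟨{y | y ∈ p.support}, fun y hy => Finset.mem_filter.2 ⟨hpS y hy, hpb y hy⟩,
    p.end_mem_support, p.start_mem_support, p.connected_induce_support.preconnected _ _⟩

theorem filter_mem_branch_union [DecidableEq V] (hG : G.IsAcyclic) (hS : IsSubtree G S)
    (hR : IsSubtree G R) (hvS : v ∈ S) (huS : u ∉ S) (huR : u ∈ R) (hvR : v ∉ R)
    (hvu : G.Adj v u) [DecidablePred (· ∈ branch G v u)] : {x ∈ S ∪ R | x ∈ branch G v u} = S := by
  have hSb : ∀ x ∈ S, x ∈ branch G v u := hS.subset_branch hvS huS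
  have hRb : ∀ x ∈ R, x ∉ branch G v u := fun x hx =>
    Set.disjoint_right.1 (disjoint_branch hG hvu) (hR.subset_branch huR hvR hx)
  rw [Finset.filter_union, Finset.filter_true_of_mem hSb, Finset.filter_false_of_mem hRb,
    Finset.union_empty]

theorem filter_mem_branch_union_filter_mem_branch [DecidableEq V] (hS : IsSubtree G S)
    (hv : v ∈ S) (hvu : v ≠ u) [DecidablePred (· ∈ branch G v u)]
    [DecidablePred (· ∈ branch G u v)] :
    ({x ∈ S | x ∈ branch G v u} ∪ {x ∈ S | x ∈ branch G u v} : Finset V) = S := by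
  rw [← Finset.filter_or]
  refine Finset.filter_true_of_mem fun x hx => mem_branch_or_mem_branch hvu ?_
  exact (hS.exists_isPath hx hv).elim fun p _ => p.reachable

theorem forall_isPath_mem_support_iff_notMem (hG : G.IsAcyclic) (hS : IsSubtree G S) (hv : v ∈ S)
    (hvu : G.Adj v u) {c : V} (hc : c ∈ branch G u v) :
    (∀ x ∈ S, ∀ p : G.Walk x c, p.IsPath → v ∈ p.support) ↔ u ∉ S := by
  classical
  obtain ⟨q, hq⟩ := hc
  refine ⟨fun hall hu => ?_, fun hu x hx p _ => ?_⟩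
  · have hmem := hall u hu q.reverse.bypass q.reverse.bypass_isPath
    have hmem' := q.reverse.support_bypass_subset_support hmem
    rw [Walk.support_reverse, List.mem_reverse] at hmem'
    exact hq hmem'
  · by_contra hvp
    refine Set.disjoint_left.1 (disjoint_branch hG hvu) (hS.subset_branch hv hu hx)
      ⟨p.append q, ?_⟩
    rw [Walk.mem_support_append_iff]
    exact not_or.2 ⟨hvp, hq⟩

end IsSubtree

end IsSubtree

section Counting

variable {V : Type*} {G : SimpleGraph V} {u v w c : V}

/-- The number of subtrees containing both `u` and `v`: the part of `N(T,u)` and of `N(T,v)` that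
cancels when the two are compared. -/
noncomputable def numSubtreesContainingBoth (G : SimpleGraph V) (v u : V) : ℕ :=
  Nat.card {S : Finset V // IsSubtree G S ∧ v ∈ S ∧ u ∈ S}

theorem numSubtreesContainingBoth_eq_ncard (G : SimpleGraph V) (v u : V) :
    numSubtreesContainingBoth G v u = {S : Finset V | IsSubtree G S ∧ v ∈ S ∧ u ∈ S}.ncard := rfl

theorem numSubtreesContainingBoth_comm (G : SimpleGraph V) (v u : V) :
    numSubtreesContainingBoth G v u = numSubtreesContainingBoth G u v :=
  Nat.card_congr (Equiv.subtypeEquivRight fun _ => and_congr_right fun _ => and_comm)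

variable [Fintype V]

theorem numSubtreesContaining_eq_ncard (G : SimpleGraph V) (v : V) :
    numSubtreesContaining G v = {S : Finset V | IsSubtree G S ∧ v ∈ S}.ncard := rfl

theorem numSubtreesWithWithout_eq_ncard (G : SimpleGraph V) (v u : V) :
    numSubtreesWithWithout G v u = {S : Finset V | IsSubtree G S ∧ v ∈ S ∧ u ∉ S}.ncard := rfl

theorem numSubtreesContaining_eq_withWithout_add_both (G : SimpleGraph V) (v u : V) :
    numSubtreesContaining G v = numSubtreesWithWithout G v u + numSubtreesContainingBoth G v u := by
  have hdisj : Disjoint {S : Finset V | IsSubtree G S ∧ v ∈ S ∧ u ∉ S}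
      {S : Finset V | IsSubtree G S ∧ v ∈ S ∧ u ∈ S} :=
    Set.disjoint_left.2 fun _ h h' => h.2.2 h'.2.2
  rw [numSubtreesWithWithout_eq_ncard, numSubtreesContainingBoth_eq_ncard,
    ← Set.ncard_union_eq hdisj, numSubtreesContaining_eq_ncard]
  congr 1
  ext S
  simp only [Set.mem_ofPred_eq, Set.mem_union]
  tauto

theorem numSubtreesContaining_lt_iff (G : SimpleGraph V) (u v : V) :
    numSubtreesContaining G u < numSubtreesContaining G v ↔
      numSubtreesWithWithout G u v < numSubtreesWithWithout G v u := by
  rw [numSubtreesContaining_eq_withWithout_add_both G u v,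
    numSubtreesContaining_eq_withWithout_add_both G v u, numSubtreesContainingBoth_comm G u v,
    Nat.add_lt_add_iff_right]

theorem numSubtreesContainingBoth_eq_mul (hG : G.IsAcyclic) (hvu : G.Adj v u) :
    numSubtreesContainingBoth G v u =
      numSubtreesWithWithout G v u * numSubtreesWithWithout G u v := by
  classical
  rw [numSubtreesContainingBoth_eq_ncard, numSubtreesWithWithout_eq_ncard,
    numSubtreesWithWithout_eq_ncard, ← Set.ncard_prod]
  refine (Set.InvOn.bijOn (f := fun S : Finset V =>
      (S.filter (· ∈ branch G v u), S.filter (· ∈ branch G u v)))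
    (f' := fun P => P.1 ∪ P.2) ⟨?_, ?_⟩ ?_ ?_).ncard_eq
  · rintro S ⟨hS, hv, -⟩
    exact hS.filter_mem_branch_union_filter_mem_branch hv hvu.ne
  · rintro ⟨S, R⟩ ⟨⟨hS, hvS, huS⟩, hR, huR, hvR⟩
    exact Prod.ext (hS.filter_mem_branch_union hG hR hvS huS huR hvR hvu) <|
      (congrArg (Finset.filter (· ∈ branch G u v)) (Finset.union_comm S R)).trans <|
        hR.filter_mem_branch_union hG hS huR hvR hvS huS hvu.symm
  · rintro S ⟨hS, hv, hu⟩
    exact ⟨⟨hS.filter_mem_branch hG hv hvu, Finset.mem_filter.2 ⟨hv, self_mem_branch hvu.ne⟩,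
        fun h => notMem_branch v u (Finset.mem_filter.1 h).2⟩,
      hS.filter_mem_branch hG hu hvu.symm, Finset.mem_filter.2 ⟨hu, self_mem_branch hvu.ne'⟩,
        fun h => notMem_branch u v (Finset.mem_filter.1 h).2⟩
  · rintro ⟨S, R⟩ ⟨⟨hS, hvS, -⟩, hR, huR, -⟩
    exact ⟨hS.union_of_adj hR hvS huR hvu, Finset.mem_union_left R hvS,
      Finset.mem_union_right S huR⟩

theorem numSubtreesContaining_eq_mul (hG : G.IsAcyclic) (hvu : G.Adj v u) :
    numSubtreesContaining G v =
      numSubtreesWithWithout G v u * (numSubtreesWithWithout G u v + 1) := by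
  rw [numSubtreesContaining_eq_withWithout_add_both G v u,
    numSubtreesContainingBoth_eq_mul hG hvu, mul_add_one, add_comm]

theorem numSubtreesWithWithout_lt_of_adj_of_adj (hG : G.IsAcyclic) {a b d : V} (hab : G.Adj a b)
    (hbd : G.Adj b d) (had : a ≠ d) :
    numSubtreesWithWithout G a b < numSubtreesWithWithout G b d := by
  classical
  have hinj : Set.InjOn (insert b) {S : Finset V | IsSubtree G S ∧ a ∈ S ∧ b ∉ S} :=
    Finset.insert_erase_invOn.2.injOn.mono fun _ hS => hS.2.2
  rw [numSubtreesWithWithout_eq_ncard, numSubtreesWithWithout_eq_ncard, ← hinj.ncard_image]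
  refine Set.ncard_lt_ncard ((Set.ssubset_iff_of_subset ?_).2 ⟨{b}, ?_, ?_⟩)
  · rintro _ ⟨S, ⟨hS, ha, hb⟩, rfl⟩
    have hd : d ∉ S := hS.notMem_of_adj_of_adj hG ha hb hab hbd had
    exact ⟨hS.insert_of_adj ha hab, Finset.mem_insert_self b S,
      Finset.mem_insert.not.2 (not_or.2 ⟨hbd.ne', hd⟩)⟩
  · exact ⟨isSubtree_singleton G b, Finset.mem_singleton_self b,
      Finset.mem_singleton.not.2 hbd.ne'⟩
  · rintro ⟨S, ⟨-, ha, -⟩, hS⟩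
    have hab' : a ∈ ({b} : Finset V) := hS ▸ Finset.mem_insert_of_mem ha
    exact hab.ne (Finset.mem_singleton.1 hab')

theorem numSubtreesContaining_lt_of_isPath_cons (hG : G.IsAcyclic) (hvu : G.Adj v u)
    (p : G.Walk u c) (hp : (Walk.cons hvu p).IsPath)
    (hlt : numSubtreesContaining G u < numSubtreesContaining G v) :
    numSubtreesContaining G c < numSubtreesContaining G v := by
  induction p generalizing v with
  | nil => exact hlt
  | @cons u x c hux p ih =>
    obtain ⟨hp', hv⟩ := (Walk.cons_isPath_iff _ _).1 hp
    have hvx : v ≠ x := by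
      rintro rfl
      exact hv (List.mem_cons_of_mem u p.start_mem_support)
    have hlt' : numSubtreesContaining G x < numSubtreesContaining G u := by
      rw [numSubtreesContaining_lt_iff] at hlt ⊢
      calc numSubtreesWithWithout G x u
        _ < numSubtreesWithWithout G u v :=
          numSubtreesWithWithout_lt_of_adj_of_adj hG hux.symm hvu.symm hvx.symm
        _ < numSubtreesWithWithout G v u := hlt
        _ < numSubtreesWithWithout G u x := numSubtreesWithWithout_lt_of_adj_of_adj hG hvu hux hvx
    exact (ih hux hp' hlt').trans hlt

theorem mem_branch_of_numSubtreesContaining_le (hG : G.IsAcyclic) (hvc : v ≠ c)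
    (hreach : G.Reachable v c) (hc : numSubtreesContaining G v ≤ numSubtreesContaining G c)
    (hw : G.Adj v w)
    (hmax : ∀ u, G.Adj v u → numSubtreesWithWithout G u v ≤ numSubtreesWithWithout G w v) :
    c ∈ branch G w v := by
  obtain ⟨p, hp⟩ := hreach.exists_isPath
  cases p with
  | nil => exact absurd rfl hvc
  | @cons _ u _ hvu p =>
    have hv : v ∉ p.support := ((Walk.cons_isPath_iff _ _).1 hp).2
    have hwu : w = u := by
      by_contra hwu
      have hlt : numSubtreesContaining G u < numSubtreesContaining G v :=
        (numSubtreesContaining_lt_iff G u v).2 <|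
          (hmax u hvu).trans_lt (numSubtreesWithWithout_lt_of_adj_of_adj hG hw.symm hvu hwu)
      exact hc.not_gt (numSubtreesContaining_lt_of_isPath_cons hG hvu p hp hlt)
    subst hwu
    exact ⟨p.reverse, by rwa [Walk.support_reverse, List.mem_reverse]⟩

theorem numSubtreesWithWithout_le_of_le (hG : G.IsAcyclic) (hu : G.Adj v u) (hw : G.Adj v w)
    (hle : numSubtreesWithWithout G u v ≤ numSubtreesWithWithout G w v) :
    numSubtreesWithWithout G v w ≤ numSubtreesWithWithout G v u := by
  refine Nat.le_of_mul_le_mul_right ?_ (numSubtreesWithWithout G w v).succ_pos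
  calc numSubtreesWithWithout G v w * (numSubtreesWithWithout G w v + 1)
    _ = numSubtreesWithWithout G v u * (numSubtreesWithWithout G u v + 1) := by
      rw [← numSubtreesContaining_eq_mul hG hw, numSubtreesContaining_eq_mul hG hu]
    _ ≤ numSubtreesWithWithout G v u * (numSubtreesWithWithout G w v + 1) := by gcongr

theorem subtreeM_eq_numSubtreesWithWithout (hG : G.IsAcyclic) (hw : G.Adj v w)
    (hmax : ∀ u, G.Adj v u → numSubtreesWithWithout G u v ≤ numSubtreesWithWithout G w v) :
    subtreeM G v = numSubtreesWithWithout G v w := by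
  refine IsLeast.csInf_eq ⟨Set.mem_image_of_mem _ hw, ?_⟩
  rintro _ ⟨u, hu, rfl⟩
  exact numSubtreesWithWithout_le_of_le hG hu hw (hmax u hu)

theorem numSubtreesGrowingAway_eq_numSubtreesWithWithout (hG : G.IsAcyclic) (hvu : G.Adj v u)
    (hc : c ∈ branch G u v) : numSubtreesGrowingAway G c v = numSubtreesWithWithout G v u :=
  Nat.card_congr <| Equiv.subtypeEquivRight fun _ => and_congr_right fun hS =>
    and_congr_right fun hv => hS.forall_isPath_mem_support_iff_notMem hG hv hvu hc

end Counting

theorem stmt0_general {V : Type*} [Fintype V] (G : SimpleGraph V) (hG : G.IsAcyclic) (c v : V)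
    (hvc : v ≠ c) (hreach : G.Reachable v c)
    (hc : numSubtreesContaining G v ≤ numSubtreesContaining G c) (w : V) (hw : G.Adj v w)
    (hmax : ∀ u : V, G.Adj v u →
      numSubtreesWithWithout G u v ≤ numSubtreesWithWithout G w v) :
    (G.induce {x : V | x ≠ v}).Reachable ⟨w, hw.ne'⟩ ⟨c, hvc.symm⟩ ∧
      numSubtreesGrowingAway G c v = subtreeM G v := by
  have hcw : c ∈ branch G w v := mem_branch_of_numSubtreesContaining_le hG hvc hreach hc hw hmax
  refine ⟨reachable_induce_of_mem_branch hw.ne' hvc.symm hcw, ?_⟩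
  rw [numSubtreesGrowingAway_eq_numSubtreesWithWithout hG hw hcw,
    subtreeM_eq_numSubtreesWithWithout hG hw hmax]

theorem stmt0 {V : Type*} [Fintype V] (G : SimpleGraph V) (hG : G.IsTree)
    (c : V) (hc : ∀ x : V, numSubtreesContaining G x ≤ numSubtreesContaining G c)
    (v : V) (hvc : v ≠ c) (w : V) (hw : G.Adj v w)
    (hmax : ∀ u : V, G.Adj v u →
      numSubtreesWithWithout G u v ≤ numSubtreesWithWithout G w v) :
    (G.induce {x : V | x ≠ v}).Reachable ⟨w, hw.ne'⟩ ⟨c, hvc.symm⟩ ∧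
      numSubtreesGrowingAway G c v = subtreeM G v := by
  exact stmt0_general G hG.isAcyclic c v hvc (hG.connected v c) (hc v) w hw hmax
end

section
/- Let T be a finite tree and v a vertex of T. Then log(1 + N(T,v)) = Σ_{w ∈ V(T)} log(1 + 1/N_v(T,w)). -/
/-!
Root the tree at `v`. A subtree growing away from `v` with top vertex `w` amounts to choosing, for
each child `c` of `w` independently, either nothing or such a subtree with top vertex `c`, so
`N_v(T,w) = ∏ (1 + N_v(T,c))` over the children `c` of `w`. Every vertex other than `v` is a child
of exactly one vertex, so multiplying over all `w` gives
`∏ w, N_v(T,w) = ∏ c ≠ v, (1 + N_v(T,c))`, and dividing `∏ w, (1 + N_v(T,w))` by this leaves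
`1 + N_v(T,v) = 1 + N(T,v)`.
-/

/-- A rooted forest on `V`, encoded by its parent function: `parent u = none` says that `u` is a
root, and well-foundedness says that iterating `parent` always ends at a root. -/
structure RootedForest (V : Type*) where
  parent : V → Option V
  wf : WellFounded fun p u => parent u = some p

namespace RootedForest

section Branches

variable {V : Type*} {F : RootedForest V} {c c' u w : V} {S : Finset V}

/-- `F.IsAncestor w u`: the vertex `w` is reached from `u` by finitely many, possibly zero, steps
to the parent. -/
def IsAncestor (F : RootedForest V) (w u : V) : Prop :=
  Relation.ReflTransGen (fun a b => F.parent a = some b) u w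

/-- `F.IsBranch w S`: the set `S` is a possibly empty subtree with top vertex `w`, encoded by
closure under parents below `w`. Emptiness is allowed so that a subtree with top vertex `w` meets
the descendants of every child of `w` in a branch. -/
def IsBranch (F : RootedForest V) (w : V) (S : Finset V) : Prop :=
  ∀ u ∈ S, u ≠ w → ∃ p ∈ S, F.parent u = some p

/-- The number of nonempty branches with top vertex `w`. -/
noncomputable def numBranches (F : RootedForest V) (w : V) : ℕ :=
  Nat.card {S : Finset V // w ∈ S ∧ F.IsBranch w S}

theorem not_isAncestor_of_parent_eq (hc : F.parent c = some w) : ¬ F.IsAncestor c w := by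
  intro h
  have hcycle : Relation.TransGen (fun p u => F.parent u = some p) c c :=
    Relation.transGen_swap.1 (.head' hc h)
  exact F.wf.transGen.irrefl.irrefl c hcycle

theorem IsAncestor.eq_of_parent_eq (h : F.IsAncestor c c') (hc : F.parent c = some w)
    (hc' : F.parent c' = some w) : c = c' := by
  rcases h.cases_head with rfl | ⟨x, hx, hcx⟩
  · rfl
  · obtain rfl : w = x := Option.mem_unique hc' hx
    exact absurd hcx (not_isAncestor_of_parent_eq hc)

theorem eq_of_parent_eq_of_isAncestor (hc : F.parent c = some w) (hc' : F.parent c' = some w)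
    (h : F.IsAncestor c u) (h' : F.IsAncestor c' u) : c = c' := by
  have parent_unique : Relator.RightUnique fun a b => F.parent a = some b :=
    fun _ _ _ hb hb' => Option.mem_unique hb hb'
  rcases Relation.ReflTransGen.total_of_right_unique parent_unique h h' with h | h
  · exact (IsAncestor.eq_of_parent_eq h hc' hc).symm
  · exact IsAncestor.eq_of_parent_eq h hc hc'

@[elab_as_elim]
theorem IsBranch.induction {motive : V → Prop} (hS : F.IsBranch w S) (top : w ∈ S → motive w)
    (child : ∀ u ∈ S, ∀ p ∈ S, F.parent u = some p → motive p → motive u) (hu : u ∈ S) :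
    motive u := by
  induction u using F.wf.induction with
  | _ u ih =>
    rcases eq_or_ne u w with rfl | huw
    · exact top hu
    · obtain ⟨p, hp, hpu⟩ := hS u hu huw
      exact child u hu p hp hpu (ih p hpu hp)

theorem IsBranch.top_mem (hS : F.IsBranch w S) (hu : u ∈ S) : w ∈ S :=
  hS.induction (motive := fun _ => w ∈ S) id (fun _ _ _ _ _ h => h) hu

theorem IsBranch.isAncestor (hS : F.IsBranch w S) (hu : u ∈ S) : F.IsAncestor w u :=
  hS.induction (fun _ => .refl) (fun _ _ _ _ hp h => .head hp h) hu

open Classical in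
theorem IsBranch.filter_isAncestor (hS : F.IsBranch w S) (hc : F.parent c = some w) :
    F.IsBranch c {u ∈ S | F.IsAncestor c u} := by
  intro u hu huc
  obtain ⟨huS, hcu⟩ := Finset.mem_filter.1 hu
  obtain ⟨p, hp, hcp⟩ := hcu.cases_head.resolve_left huc
  have huw : u ≠ w := by
    rintro rfl
    exact not_isAncestor_of_parent_eq hc hcu
  obtain ⟨q, hqS, hq⟩ := hS u huS huw
  obtain rfl : p = q := Option.mem_unique hp hq
  exact ⟨p, Finset.mem_filter.2 ⟨hqS, hcp⟩, hp⟩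

theorem isBranch_insert_biUnion [Fintype V] [DecidableEq V]
    {B : {c // F.parent c = some w} → Finset V} (hB : ∀ c, F.IsBranch c.1 (B c)) :
    F.IsBranch w (insert w (Finset.univ.biUnion B)) := by
  intro u hu huw
  obtain ⟨c, -, huc⟩ := Finset.mem_biUnion.1 (Finset.mem_of_mem_insert_of_ne hu huw)
  by_cases h : u = c
  · exact ⟨w, Finset.mem_insert_self _ _, h ▸ c.2⟩
  · obtain ⟨p, hp, hpu⟩ := hB c u huc h
    exact ⟨p, Finset.mem_insert_of_mem (Finset.mem_biUnion.2 ⟨c, Finset.mem_univ c, hp⟩), hpu⟩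

open Classical in
/-- Cutting off the top vertex `w` of a nonempty branch leaves one branch, possibly empty, for each
child of `w`; this is the recursion behind the product formula for `numBranches`. -/
noncomputable def branchEquiv [Fintype V] (F : RootedForest V) (w : V) :
    {S : Finset V // w ∈ S ∧ F.IsBranch w S} ≃
      ((c : {c // F.parent c = some w}) → {S : Finset V // F.IsBranch c.1 S}) where
  toFun S c := ⟨{u ∈ S.1 | F.IsAncestor c.1 u}, S.2.2.filter_isAncestor c.2⟩
  invFun B := ⟨insert w (Finset.univ.biUnion fun c => (B c).1), Finset.mem_insert_self _ _,
    isBranch_insert_biUnion fun c => (B c).2⟩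
  left_inv := by
    rintro ⟨S, hw, hS⟩
    ext u
    simp only [Finset.mem_insert, Finset.mem_biUnion, Finset.mem_univ, true_and,
      Finset.mem_filter]
    constructor
    · rintro (rfl | ⟨c, hu, -⟩)
      exacts [hw, hu]
    · intro hu
      rcases (hS.isAncestor hu).cases_tail with rfl | ⟨c, hcu, hc⟩
      exacts [.inl rfl, .inr ⟨⟨c, hc⟩, hu, hcu⟩]
  right_inv B := by
    ext c u
    simp only [Finset.mem_insert, Finset.mem_biUnion, Finset.mem_univ, true_and,
      Finset.mem_filter]
    constructor
    · rintro ⟨rfl | ⟨c', hu⟩, hcu⟩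
      · exact absurd hcu (not_isAncestor_of_parent_eq c.2)
      · have hcc' : (c : V) = c' :=
          eq_of_parent_eq_of_isAncestor c.2 c'.2 hcu ((B c').2.isAncestor hu)
        rwa [Subtype.ext hcc']
    · exact fun hu => ⟨.inr ⟨c, hu⟩, (B c).2.isAncestor hu⟩

end Branches

section Counting

variable {V : Type*} (F : RootedForest V)

theorem numBranches_pos [Finite V] (w : V) : 0 < F.numBranches w := by
  have singleton_isBranch : F.IsBranch w {w} :=
    fun _ hu huw => absurd (Finset.mem_singleton.1 hu) huw
  have : Nonempty {S : Finset V // w ∈ S ∧ F.IsBranch w S} :=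
    ⟨{w}, Finset.mem_singleton_self w, singleton_isBranch⟩
  exact Nat.card_pos

theorem card_isBranch [Finite V] (w : V) :
    Nat.card {S : Finset V // F.IsBranch w S} = 1 + F.numBranches w := by
  have empty_or_mem_top : {S | F.IsBranch w S} = insert ∅ {S | w ∈ S ∧ F.IsBranch w S} := by
    ext S
    constructor
    · intro hS
      rcases S.eq_empty_or_nonempty with rfl | ⟨u, hu⟩
      exacts [.inl rfl, .inr ⟨hS.top_mem hu, hS⟩]
    · rintro (rfl | hS)
      exacts [fun u hu => absurd hu (Finset.notMem_empty u), hS.2]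
  calc Nat.card {S : Finset V // F.IsBranch w S}
    _ = (insert ∅ {S | w ∈ S ∧ F.IsBranch w S}).ncard := by rw [← empty_or_mem_top]; rfl
    _ = {S | w ∈ S ∧ F.IsBranch w S}.ncard + 1 := Set.ncard_insert_of_notMem (by simp)
    _ = 1 + F.numBranches w := add_comm _ _

variable [Fintype V]

theorem numBranches_eq_prod [DecidableEq V] (w : V) :
    F.numBranches w = ∏ c with F.parent c = some w, (1 + F.numBranches c) :=
  calc F.numBranches w
    _ = ∏ c : {c // F.parent c = some w}, Nat.card {S : Finset V // F.IsBranch c S} := by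
      rw [numBranches, Nat.card_congr (F.branchEquiv w), Nat.card_pi]
    _ = ∏ c : {c // F.parent c = some w}, (1 + F.numBranches c) :=
      Finset.prod_congr rfl fun c _ => F.card_isBranch c
    _ = ∏ c with F.parent c = some w, (1 + F.numBranches c) :=
      (Finset.prod_subtype _ (by simp) fun c => 1 + F.numBranches c).symm

theorem prod_one_add_numBranches :
    ∏ w, (1 + F.numBranches w) =
      (∏ r with F.parent r = none, (1 + F.numBranches r)) * ∏ w, F.numBranches w := by
  classical
  rw [← Finset.prod_fiberwise Finset.univ F.parent, Fintype.prod_option]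
  simp only [← numBranches_eq_prod]

theorem prod_one_add_one_div_numBranches (K : Type*) [Semifield K] [CharZero K] :
    ∏ w, (1 + 1 / (F.numBranches w : K)) =
      ∏ r with F.parent r = none, (1 + (F.numBranches r : K)) := by
  have hne (w : V) : (F.numBranches w : K) ≠ 0 := Nat.cast_ne_zero.2 (F.numBranches_pos w).ne'
  calc ∏ w, (1 + 1 / (F.numBranches w : K))
    _ = ∏ w, (1 + (F.numBranches w : K)) / F.numBranches w :=
      Finset.prod_congr rfl fun w _ => by rw [add_div, div_self (hne w), add_comm]
    _ = (∏ w, (1 + (F.numBranches w : K))) / ∏ w, (F.numBranches w : K) :=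
      Finset.prod_div_distrib ..
    _ = ∏ r with F.parent r = none, (1 + (F.numBranches r : K)) := by
      rw [div_eq_iff (Finset.prod_ne_zero_iff.2 fun w _ => hne w)]
      exact_mod_cast F.prod_one_add_numBranches

end Counting

end RootedForest

section Tree

open SimpleGraph

variable {V : Type*} {G : SimpleGraph V} {u v w : V}

theorem mem_of_mem_support_of_preconnected_induce (hG : G.IsAcyclic) {S : Set V}
    (hS : (G.induce S).Preconnected) (hu : u ∈ S) (hw : w ∈ S) {p : G.Walk u w} (hp : p.IsPath)
    {x : V} (hx : x ∈ p.support) : x ∈ S := by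
  obtain ⟨q, hq⟩ := hS.exists_isPath ⟨u, hu⟩ ⟨w, hw⟩
  let ι := (Embedding.induce S (G := G)).toHom
  have hpq : p = q.map ι := congrArg Subtype.val <|
    (hG.subsingleton_path u w).elim ⟨p, hp⟩ ⟨q.map ι, hq.map Subtype.val_injective⟩
  have hxq : x ∈ (q.map ι).support := hpq ▸ hx
  rw [Walk.support_map] at hxq
  obtain ⟨y, -, rfl⟩ := List.mem_map.1 hxq
  exact y.2

/-- The unique path from `u` to `v` in a tree. -/
noncomputable def treePath (hG : G.IsTree) (u v : V) : G.Walk u v :=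
  (hG.existsUnique_path u v).choose

theorem isPath_treePath (hG : G.IsTree) (u v : V) : (treePath hG u v).IsPath :=
  (hG.existsUnique_path u v).choose_spec.1

theorem eq_treePath (hG : G.IsTree) {p : G.Walk u v} (hp : p.IsPath) : p = treePath hG u v :=
  (hG.existsUnique_path u v).choose_spec.2 p hp

theorem treePath_snd (hG : G.IsTree) (u v : V) :
    treePath hG (treePath hG u v).snd v = (treePath hG u v).tail :=
  (eq_treePath hG (isPath_treePath hG u v).tail).symm

theorem length_treePath_snd_lt (hG : G.IsTree) (huv : u ≠ v) :
    (treePath hG (treePath hG u v).snd v).length < (treePath hG u v).length := by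
  rw [treePath_snd, Nat.lt_iff_add_one_le]
  exact (Walk.length_tail_add_one (Walk.not_nil_of_ne huv)).le

open Classical in
/-- The tree `G` rooted at `v`: the parent of `u ≠ v` is the next vertex on the path from `u` to
`v`. -/
noncomputable def rootedTree (hG : G.IsTree) (v : V) : RootedForest V where
  parent u := if u = v then none else some (treePath hG u v).snd
  wf := by
    refine Subrelation.wf (fun {p u} hp => ?_) (measure fun u => (treePath hG u v).length).wf
    obtain ⟨huv, rfl⟩ : u ≠ v ∧ (treePath hG u v).snd = p := by simpa using hp
    exact length_treePath_snd_lt hG huv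

theorem rootedTree_parent_eq_none_iff (hG : G.IsTree) :
    (rootedTree hG v).parent u = none ↔ u = v := by
  simp [rootedTree]

theorem rootedTree_parent_eq_some_iff (hG : G.IsTree) :
    (rootedTree hG v).parent u = some w ↔ u ≠ v ∧ (treePath hG u v).snd = w := by
  simp [rootedTree]

theorem isBranch_rootedTree (hG : G.IsTree) {S : Finset V}
    (hS : (G.induce (S : Set V)).Preconnected) (hw : w ∈ S)
    (hpath : ∀ u ∈ S, w ∈ (treePath hG u v).support) : (rootedTree hG v).IsBranch w S := by
  classical
  intro u hu huw
  let p := (treePath hG u v).takeUntil w (hpath u hu)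
  have hp : p.IsPath := (isPath_treePath hG u v).takeUntil _
  have huv : u ≠ v := by
    rintro rfl
    have hwu := hpath u hu
    rw [← eq_treePath hG .nil, Walk.mem_support_nil_iff] at hwu
    exact huw hwu.symm
  -- The path from `u` to `w` stays in `S` and begins like the path from `u` to the root.
  have hsnd : p.snd ∈ S :=
    mem_of_mem_support_of_preconnected_induce hG.isAcyclic hS hu hw hp (p.getVert_mem_support 1)
  refine ⟨p.snd, hsnd, (rootedTree_parent_eq_some_iff hG).2 ⟨huv, ?_⟩⟩
  exact (Walk.snd_takeUntil huw.symm _ _).symm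

theorem mem_support_treePath_of_isBranch (hG : G.IsTree) {S : Finset V}
    (hS : (rootedTree hG v).IsBranch w S) (hu : u ∈ S) : w ∈ (treePath hG u v).support := by
  refine hS.induction (fun _ => Walk.start_mem_support _) ?_ hu
  intro u _ p _ hp hwp
  obtain ⟨huv, rfl⟩ := (rootedTree_parent_eq_some_iff hG).1 hp
  rw [treePath_snd, Walk.support_tail_of_not_nil _ (Walk.not_nil_of_ne huv)] at hwp
  exact List.mem_of_mem_tail hwp

theorem connected_induce_of_isBranch (hG : G.IsTree) {S : Finset V}
    (hS : (rootedTree hG v).IsBranch w S) (hw : w ∈ S) : (G.induce (S : Set V)).Connected := by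
  have reachable_top (u : V) (hu : u ∈ S) :
      (G.induce (S : Set V)).Reachable ⟨w, hw⟩ ⟨u, hu⟩ := by
    refine hS.induction (motive := fun u => ∀ hu : u ∈ S,
      (G.induce (S : Set V)).Reachable ⟨w, hw⟩ ⟨u, hu⟩) (fun _ _ => .rfl) ?_ hu hu
    intro u _ p hpS hp ih hu
    obtain ⟨huv, rfl⟩ := (rootedTree_parent_eq_some_iff hG).1 hp
    have hadj : (G.induce (S : Set V)).Adj ⟨_, hpS⟩ ⟨u, hu⟩ :=
      (Walk.adj_snd (Walk.not_nil_of_ne huv)).symm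
    exact (ih hpS).trans hadj.reachable
  exact (connected_iff_exists_forall_reachable _).2 ⟨⟨w, hw⟩, fun u => reachable_top u u.2⟩

theorem numSubtreesGrowingAway_eq_numBranches [Fintype V] (hG : G.IsTree) (v w : V) :
    numSubtreesGrowingAway G v w = (rootedTree hG v).numBranches w := by
  refine Nat.card_congr (Equiv.subtypeEquivRight fun S => ⟨?_, ?_⟩)
  · rintro ⟨hS, hw, hpath⟩
    exact ⟨hw, isBranch_rootedTree hG hS.2.preconnected hw
      fun u hu => hpath u hu _ (isPath_treePath hG u v)⟩
  · rintro ⟨hw, hS⟩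
    refine ⟨⟨⟨w, hw⟩, connected_induce_of_isBranch hG hS hw⟩, hw, fun u hu p hp => ?_⟩
    rw [eq_treePath hG hp]
    exact mem_support_treePath_of_isBranch hG hS hu

theorem numSubtreesGrowingAway_self [Fintype V] (G : SimpleGraph V) (v : V) :
    numSubtreesGrowingAway G v v = numSubtreesContaining G v :=
  Nat.card_congr <| Equiv.subtypeEquivRight fun _ =>
    ⟨fun h => ⟨h.1, h.2.1⟩, fun h => ⟨h.1, h.2, fun _ _ p _ => p.end_mem_support⟩⟩

end Tree

theorem stmt2 {V : Type*} [Fintype V] (G : SimpleGraph V) (hG : G.IsTree) (v : V) :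
    Real.log (1 + (numSubtreesContaining G v : ℝ)) =
      ∑ w : V, Real.log (1 + 1 / (numSubtreesGrowingAway G v w : ℝ)) := by
  classical
  have hroot : ({r | (rootedTree hG v).parent r = none} : Finset V) = {v} := by
    ext r
    simp [rootedTree_parent_eq_none_iff]
  rw [← numSubtreesGrowingAway_self, ← Real.log_prod fun w _ => by positivity]
  simp only [numSubtreesGrowingAway_eq_numBranches hG]
  rw [RootedForest.prod_one_add_one_div_numBranches, hroot, Finset.prod_singleton]
end

section
/- Let m and r be positive integers with 2r − 1 < m, and let T be a finite tree that is not an m-good tree. Then T has at least (1/2)·(1 − 2(r−1)/m)·|T| vertices v such that the subgraph of T induced by all vertices at distance at most r from v is isomorphic to a path on 2r+1 vertices via an isomorphism mapping v to the middle vertex of the path. -/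
/-- A path segment of `G`: a path all of whose internal vertices have degree 2 in `G`,
and whose endpoints have degree different from 2 in `G`. -/
def IsPathSegment {V : Type*} (G : SimpleGraph V) {a b : V} (p : G.Walk a b) : Prop :=
  p.IsPath ∧ Nat.card (G.neighborSet a) ≠ 2 ∧ Nat.card (G.neighborSet b) ≠ 2 ∧
    ∀ x ∈ p.support, x ≠ a → x ≠ b → Nat.card (G.neighborSet x) = 2

/-- The vertex `x` lies in (i.e., is an internal vertex of) a path segment of length
greater than `m`. -/
def LiesInSegmentLongerThan {V : Type*} (G : SimpleGraph V) (m : ℕ) (x : V) : Prop :=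
  ∃ (a b : V) (p : G.Walk a b), IsPathSegment G p ∧ m < p.length ∧
    x ∈ p.support ∧ x ≠ a ∧ x ≠ b

/-- `G` is an `m`-good tree: at most half of the vertices lie in path segments of
length greater than `m`. -/
def IsMGood {V : Type*} [Fintype V] (G : SimpleGraph V) (m : ℕ) : Prop :=
  2 * Nat.card {x : V | LiesInSegmentLongerThan G m x} ≤ Fintype.card V

/-!
Let `p` be a path segment of length `L > m ≥ 2r` in a connected graph `G`. A vertex at least `r`
steps along `p` from both of its ends has only vertices of `p` within distance `r`, so its ball of
radius `r` is a path centred at it. Hence all but at most `2(r - 1)` of the `L - 1 ≥ m` internal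
vertices of `p` have such a ball, which is a proportion of at least `1 - 2(r - 1) / m`. The sets of
internal vertices of two segments are equal or disjoint, being connected components of the graph
spanned by the vertices of degree 2; so the same proportion holds in their union, which contains
more than half of the vertices when `G` is not `m`-good.
-/

open SimpleGraph

section Fiberwise

variable {α β R : Type*} [Semiring R] [PartialOrder R] [IsOrderedRing R]

theorem mul_ncard_le_ncard_of_fiberwise {s t : Set α} (hs : s.Finite) (ht : t.Finite)
    (f : α → β) {c : R}
    (h : ∀ x ∈ s, c * (s ∩ f ⁻¹' {f x}).ncard ≤ (t ∩ f ⁻¹' {f x}).ncard) :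
    c * s.ncard ≤ t.ncard := by
  classical
  lift s to Finset α using hs
  lift t to Finset α using ht
  have coe_fiber (u : Finset α) (b : β) : (u ∩ f ⁻¹' {b} : Set α) = {a ∈ u | f a = b} := by
    ext; simp
  simp only [coe_fiber, Set.ncard_coe_finset, Finset.mem_coe] at h ⊢
  calc c * s.card = ∑ b ∈ s.image f, c * {a ∈ s | f a = b}.card := by
        rw [Finset.card_eq_sum_card_image f s, Nat.cast_sum, Finset.mul_sum]
    _ ≤ ∑ b ∈ s.image f, ({a ∈ t | f a = b}.card : R) :=
        Finset.sum_le_sum fun b hb => by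
          obtain ⟨x, hx, rfl⟩ := Finset.mem_image.1 hb
          exact h x hx
    _ ≤ t.card := by
        rw [← Nat.cast_sum]
        exact Nat.mono_cast <| (Finset.sum_card_fiberwise_eq_card_filter t _ f).trans_le
          (Finset.card_filter_le _ _)

end Fiberwise

section Walks

variable {V : Type*} {G : SimpleGraph V} {a b : V}

theorem dist_getVert_getVert_le (p : G.Walk a b) {i j : ℕ} (hij : i ≤ j) :
    G.dist (p.getVert i) (p.getVert j) ≤ j - i := by
  calc G.dist (p.getVert i) (p.getVert j)
      = G.dist (p.getVert i) ((p.drop i).getVert (j - i)) := by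
        rw [Walk.drop_getVert, Nat.add_sub_cancel' hij]
    _ ≤ ((p.drop i).take (j - i)).length := dist_le _
    _ ≤ j - i := by
        rw [Walk.take_length]
        exact min_le_left _ _

/-- The internal vertices of a walk: those it visits other than its two endpoints. -/
def internalVertices (p : G.Walk a b) : Set V :=
  {x | x ∈ p.support ∧ x ≠ a ∧ x ≠ b}

theorem internalVertices_eq_image {p : G.Walk a b} (hp : p.IsPath) :
    internalVertices p = p.getVert '' Set.Ioo 0 p.length := by
  ext x
  simp only [internalVertices, Set.mem_ofPred_eq, Walk.mem_support_iff_exists_getVert,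
    Set.mem_image, Set.mem_Ioo]
  constructor
  · rintro ⟨⟨i, rfl, hi⟩, ha, hb⟩
    rw [Ne, hp.getVert_eq_start_iff hi] at ha
    rw [Ne, hp.getVert_eq_end_iff hi] at hb
    exact ⟨i, by omega, rfl⟩
  · rintro ⟨i, ⟨h0, hi⟩, rfl⟩
    rw [Ne, Ne, hp.getVert_eq_start_iff hi.le, hp.getVert_eq_end_iff hi.le]
    exact ⟨⟨i, rfl, hi.le⟩, h0.ne', hi.ne⟩

theorem ncard_internalVertices {p : G.Walk a b} (hp : p.IsPath) :
    (internalVertices p).ncard = p.length - 1 := by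
  rw [internalVertices_eq_image hp,
    (hp.getVert_injOn.mono fun i hi => hi.2.le).ncard_image, Set.ncard_Ioo_nat, Nat.sub_zero]

end Walks

section PathBalls

variable {V : Type*} {G : SimpleGraph V} {r : ℕ} {v : V}

/-- `v` is the centre of a path ball of radius `r`: the vertices at distance at most `r` from `v`
induce a path on `2 * r + 1` vertices with `v` in the middle. -/
def IsPathBallCenter (G : SimpleGraph V) (r : ℕ) (v : V) : Prop :=
  ∃ φ : (G.induce {x : V | G.dist v x ≤ r}) ≃g pathGraph (2 * r + 1),
    φ ⟨v, by simp [SimpleGraph.dist_self]⟩ = ⟨r, by omega⟩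

theorem isPathBallCenter_of_embedding (f : pathGraph (2 * r + 1) ↪g G)
    (hv : f ⟨r, by omega⟩ = v) (hf : Set.range f = {x | G.dist v x ≤ r}) :
    IsPathBallCenter G r v := by
  have hiso : ∀ (s : Set V) (hs : v ∈ s), Set.range f = s →
      ∃ φ : G.induce s ≃g pathGraph (2 * r + 1), φ ⟨v, hs⟩ = ⟨r, by omega⟩ := by
    rintro _ hs rfl
    exact ⟨f.isoInduceRange.symm, (RelIso.symm_apply_eq _).2 (Subtype.ext hv.symm)⟩
  exact hiso _ _ hf

end PathBalls

/-- The graph on all vertices of `G` whose edges are the edges of `G` between vertices of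
degree 2. The internal vertices of a path segment form one of its connected components, so its
components separate the path segments from each other. -/
def degreeTwoGraph {V : Type*} (G : SimpleGraph V) : SimpleGraph V :=
  (G.induce {x | Nat.card (G.neighborSet x) = 2}).spanningCoe

theorem degreeTwoGraph_adj {V : Type*} {G : SimpleGraph V} {x y : V} :
    (degreeTwoGraph G).Adj x y ↔
      G.Adj x y ∧ Nat.card (G.neighborSet x) = 2 ∧ Nat.card (G.neighborSet y) = 2 := by
  simp [degreeTwoGraph]

namespace IsPathSegment

variable {V : Type*} {G : SimpleGraph V} {a b : V} {p : G.Walk a b} {i j r : ℕ}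

theorem getVert_mem_internalVertices (hp : IsPathSegment G p) (hi : i ∈ Set.Ioo 0 p.length) :
    p.getVert i ∈ internalVertices p :=
  internalVertices_eq_image hp.1 ▸ Set.mem_image_of_mem _ hi

theorem card_neighborSet_eq_two (hp : IsPathSegment G p) {x : V} (hx : x ∈ internalVertices p) :
    Nat.card (G.neighborSet x) = 2 :=
  hp.2.2.2 x hx.1 hx.2.1 hx.2.2

theorem mem_internalVertices_of_card_neighborSet_eq_two (hp : IsPathSegment G p) {x : V}
    (hx : x ∈ p.support) (hdeg : Nat.card (G.neighborSet x) = 2) : x ∈ internalVertices p :=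
  ⟨hx, fun h => hp.2.1 (h ▸ hdeg), fun h => hp.2.2.1 (h ▸ hdeg)⟩

theorem neighborSet_getVert (hp : IsPathSegment G p) (hi : i ∈ Set.Ioo 0 p.length) :
    G.neighborSet (p.getVert i) = {p.getVert (i - 1), p.getVert (i + 1)} := by
  obtain ⟨h0, hi'⟩ := hi
  have hcard : (G.neighborSet (p.getVert i)).ncard = 2 :=
    hp.card_neighborSet_eq_two (hp.getVert_mem_internalVertices ⟨h0, hi'⟩)
  have hprev : G.Adj (p.getVert (i - 1)) (p.getVert i) := by
    simpa only [Nat.sub_add_cancel h0] using p.adj_getVert_succ (i := i - 1) (by omega)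
  have hne : p.getVert (i - 1) ≠ p.getVert (i + 1) := fun h => by
    have := hp.1.getVert_injOn (by grind) (by grind) h
    omega
  refine (Set.eq_of_subset_of_ncard_le ?_ (by rw [hcard, Set.ncard_pair hne])
    (Set.finite_of_ncard_ne_zero (by omega))).symm
  exact Set.pair_subset hprev.symm (p.adj_getVert_succ hi')

theorem adj_getVert_getVert_iff (hp : IsPathSegment G p) (hi : i ∈ Set.Ioo 0 p.length)
    (hj : j ≤ p.length) :
    G.Adj (p.getVert i) (p.getVert j) ↔ i + 1 = j ∨ j + 1 = i := by
  obtain ⟨h0, hi'⟩ := hi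
  have hinj {k : ℕ} (hk : k ≤ p.length) : p.getVert j = p.getVert k ↔ j = k :=
    hp.1.getVert_injOn.eq_iff hj hk
  rw [← mem_neighborSet, hp.neighborSet_getVert ⟨h0, hi'⟩, Set.mem_insert_iff,
    Set.mem_singleton_iff, hinj (by omega), hinj hi']
  omega

theorem mem_image_getVert_of_walk (hp : IsPathSegment G p) {u x : V} (q : G.Walk u x)
    (hu : p.getVert i = u) (hqi : q.length ≤ i) (hiq : i + q.length ≤ p.length) :
    x ∈ p.getVert '' Set.Icc (i - q.length) (i + q.length) := by
  induction q generalizing i with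
  | nil => exact ⟨i, by simp, hu⟩
  | cons hadj q ih =>
    subst hu
    rw [Walk.length_cons] at hqi hiq ⊢
    rw [← mem_neighborSet, hp.neighborSet_getVert ⟨by omega, by omega⟩] at hadj
    rcases hadj with rfl | rfl <;>
      exact Set.image_mono (Set.Icc_subset_Icc (by omega) (by omega))
        (ih rfl (by omega) (by omega))

theorem setOf_dist_getVert_le (hG : G.Connected) (hp : IsPathSegment G p) (hri : r ≤ i)
    (hir : i + r ≤ p.length) :
    {x | G.dist (p.getVert i) x ≤ r} = p.getVert '' Set.Icc (i - r) (i + r) := by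
  refine Set.Subset.antisymm (fun x hx => ?_) ?_
  · obtain ⟨q, hq⟩ := hG.exists_walk_length_eq_dist (p.getVert i) x
    have hqr : q.length ≤ r := hq.trans_le hx
    exact Set.image_mono (Set.Icc_subset_Icc (by omega) (by omega))
      (hp.mem_image_getVert_of_walk q rfl (by omega) (by omega))
  · rintro _ ⟨j, ⟨hij, hji⟩, rfl⟩
    rcases le_total i j with h | h
    · exact (dist_getVert_getVert_le p h).trans (by omega)
    · rw [Set.mem_ofPred_eq, SimpleGraph.dist_comm]
      exact (dist_getVert_getVert_le p h).trans (by omega)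

/-- The stretch of `n` edges of a path segment starting at its `s`-th vertex, as an induced path of
`G`. It must be shorter than the segment, whose two endpoints may be adjacent in `G`. -/
def pathGraphEmbedding (hp : IsPathSegment G p) {s n : ℕ} (hn : n < p.length)
    (hs : s + n ≤ p.length) : pathGraph (n + 1) ↪g G where
  toFun k := p.getVert (s + k)
  inj' k l hkl := by
    have := hp.1.getVert_injOn (by grind) (by grind) hkl
    omega
  map_rel_iff' {k l} := by
    have := k.2
    have := l.2
    change G.Adj (p.getVert (s + k)) (p.getVert (s + l)) ↔ _
    rw [pathGraph_adj]
    rcases eq_or_ne k l with rfl | hkl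
    · simp
    have hkl' : (k : ℕ) ≠ l := Fin.val_ne_of_ne hkl
    by_cases hk : s + k ∈ Set.Ioo 0 p.length
    · rw [hp.adj_getVert_getVert_iff hk (by omega)]
      omega
    · have hl : s + l ∈ Set.Ioo 0 p.length := by grind
      rw [adj_comm, hp.adj_getVert_getVert_iff hl (by omega)]
      omega

theorem range_pathGraphEmbedding (hp : IsPathSegment G p) {s n : ℕ} (hn : n < p.length)
    (hs : s + n ≤ p.length) :
    Set.range (hp.pathGraphEmbedding hn hs) = p.getVert '' Set.Icc s (s + n) := by
  ext x
  constructor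
  · rintro ⟨k, rfl⟩
    exact ⟨s + k, by grind, rfl⟩
  · rintro ⟨j, ⟨hsj, hj⟩, rfl⟩
    exact ⟨⟨j - s, by omega⟩, congrArg p.getVert (Nat.add_sub_cancel' hsj)⟩

theorem isPathBallCenter_getVert (hG : G.Connected) (hp : IsPathSegment G p)
    (hlen : 2 * r < p.length) (hri : r ≤ i) (hir : i + r ≤ p.length) :
    IsPathBallCenter G r (p.getVert i) := by
  refine isPathBallCenter_of_embedding (hp.pathGraphEmbedding (s := i - r) hlen (by omega))
    (congrArg p.getVert (Nat.sub_add_cancel hri)) ?_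
  rw [range_pathGraphEmbedding, hp.setOf_dist_getVert_le hG hri hir]
  congr 2
  omega

theorem length_sub_one_le_ncard_add (hG : G.Connected) (hp : IsPathSegment G p) (hr : 0 < r)
    (hlen : 2 * r < p.length) :
    p.length - 1 ≤ ({v | IsPathBallCenter G r v} ∩ internalVertices p).ncard + 2 * (r - 1) := by
  have hsub : p.getVert '' Set.Icc r (p.length - r) ⊆
      {v | IsPathBallCenter G r v} ∩ internalVertices p := by
    rintro _ ⟨i, ⟨hri, hir⟩, rfl⟩
    exact ⟨hp.isPathBallCenter_getVert hG hlen hri (by omega),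
      hp.getVert_mem_internalVertices ⟨by omega, by omega⟩⟩
  have hfin : (internalVertices p).Finite :=
    p.support.finite_toSet.subset fun _ hx => hx.1
  have hcard : p.length - r + 1 - r ≤
      ({v | IsPathBallCenter G r v} ∩ internalVertices p).ncard :=
    calc p.length - r + 1 - r = (p.getVert '' Set.Icc r (p.length - r)).ncard := by
          rw [(hp.1.getVert_injOn.mono fun i hi => hi.2.trans (Nat.sub_le _ _)).ncard_image,
            Set.ncard_Icc_nat]
      _ ≤ _ := Set.ncard_le_ncard hsub (hfin.subset Set.inter_subset_right)
  omega

theorem degreeTwoGraph_reachable (hp : IsPathSegment G p) (hi : 0 < i) (hij : i ≤ j)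
    (hj : j < p.length) : (degreeTwoGraph G).Reachable (p.getVert i) (p.getVert j) := by
  induction j, hij using Nat.le_induction with
  | base => exact Reachable.refl _
  | succ j hij ih =>
    have hdeg {k : ℕ} (hk : k ∈ Set.Ioo 0 p.length) :=
      hp.card_neighborSet_eq_two (hp.getVert_mem_internalVertices hk)
    have hadj : (degreeTwoGraph G).Adj (p.getVert j) (p.getVert (j + 1)) :=
      degreeTwoGraph_adj.2 ⟨p.adj_getVert_succ (by omega), hdeg ⟨by omega, by omega⟩,
        hdeg ⟨by omega, hj⟩⟩
    exact (ih (by omega)).trans hadj.reachable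

theorem mem_internalVertices_of_degreeTwoGraph_adj (hp : IsPathSegment G p) {x y : V}
    (hx : x ∈ internalVertices p) (hadj : (degreeTwoGraph G).Adj x y) :
    y ∈ internalVertices p := by
  rw [internalVertices_eq_image hp.1] at hx
  obtain ⟨i, hi, rfl⟩ := hx
  obtain ⟨hadj, -, hdeg⟩ := degreeTwoGraph_adj.1 hadj
  refine hp.mem_internalVertices_of_card_neighborSet_eq_two ?_ hdeg
  rw [← mem_neighborSet, hp.neighborSet_getVert hi] at hadj
  rcases hadj with rfl | rfl <;> exact p.getVert_mem_support _

theorem supp_connectedComponentMk_degreeTwoGraph (hp : IsPathSegment G p) {x : V}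
    (hx : x ∈ internalVertices p) :
    ((degreeTwoGraph G).connectedComponentMk x).supp = internalVertices p := by
  ext y
  rw [ConnectedComponent.mem_supp_iff, ConnectedComponent.eq]
  constructor
  · rintro ⟨w⟩
    induction w with
    | nil => exact hx
    | cons hadj _ ih => exact hp.mem_internalVertices_of_degreeTwoGraph_adj (ih hx) hadj.symm
  · intro hy
    rw [internalVertices_eq_image hp.1] at hx hy
    obtain ⟨i, hi, rfl⟩ := hx
    obtain ⟨j, hj, rfl⟩ := hy
    rcases le_total i j with h | h
    · exact (hp.degreeTwoGraph_reachable hi.1 h hj.2).symm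
    · exact hp.degreeTwoGraph_reachable hj.1 h hi.2

theorem mul_ncard_internalVertices_le (hG : G.Connected) (hp : IsPathSegment G p) {m : ℕ}
    (hr : 0 < r) (hrm : 2 * r ≤ m) (hlen : m < p.length) :
    (1 - 2 * ((r : ℝ) - 1) / m) * (internalVertices p).ncard ≤
      ({v | IsPathBallCenter G r v} ∩ internalVertices p).ncard := by
  have hm : (0 : ℝ) < m := by exact_mod_cast (by omega : 0 < m)
  have hcount : ((internalVertices p).ncard : ℝ) ≤
      ({v | IsPathBallCenter G r v} ∩ internalVertices p).ncard + 2 * ((r : ℝ) - 1) := by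
    rw [ncard_internalVertices hp.1, ← Nat.cast_pred hr]
    exact_mod_cast hp.length_sub_one_le_ncard_add hG hr (hrm.trans_lt hlen)
  have hlong : (m : ℝ) ≤ (internalVertices p).ncard := by
    rw [ncard_internalVertices hp.1]
    exact_mod_cast Nat.le_sub_one_of_lt hlen
  have hr1 : (1 : ℝ) ≤ r := by exact_mod_cast hr
  have hloss : 2 * ((r : ℝ) - 1) ≤ 2 * ((r : ℝ) - 1) / m * (internalVertices p).ncard := by
    rw [div_mul_eq_mul_div, le_div_iff₀ hm]
    exact mul_le_mul_of_nonneg_left hlong (by linarith)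
  linarith

end IsPathSegment

theorem mul_ncard_liesInSegmentLongerThan_le {V : Type*} [Finite V] {G : SimpleGraph V}
    (hG : G.Connected) {m r : ℕ} (hr : 0 < r) (hrm : 2 * r ≤ m) :
    (1 - 2 * ((r : ℝ) - 1) / m) * {x | LiesInSegmentLongerThan G m x}.ncard ≤
      {v | IsPathBallCenter G r v}.ncard := by
  refine mul_ncard_le_ncard_of_fiberwise (Set.toFinite _) (Set.toFinite _)
    (degreeTwoGraph G).connectedComponentMk fun x ⟨a, b, p, hp, hlen, hx⟩ => ?_
  have hfiber : (degreeTwoGraph G).connectedComponentMk ⁻¹'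
      {(degreeTwoGraph G).connectedComponentMk x} = internalVertices p :=
    hp.supp_connectedComponentMk_degreeTwoGraph hx
  have hsub : internalVertices p ⊆ {x | LiesInSegmentLongerThan G m x} :=
    fun y hy => ⟨a, b, p, hp, hlen, hy⟩
  rw [hfiber, Set.inter_eq_right.2 hsub]
  exact hp.mul_ncard_internalVertices_le hG hr hrm hlen

theorem stmt5_general {V : Type*} [Fintype V] (G : SimpleGraph V) (hG : G.Connected)
    (m r : ℕ) (hr : 0 < r) (hrm : 2 * r ≤ m) (hbad : ¬ IsMGood G m) :
    (1 / 2 : ℝ) * (1 - 2 * ((r : ℝ) - 1) / (m : ℝ)) * (Fintype.card V : ℝ) ≤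
      (Nat.card {v : V | IsPathBallCenter G r v} : ℝ) := by
  have hm : (0 : ℝ) < m := by exact_mod_cast (by omega : 0 < m)
  have hfrac : 0 ≤ 1 - 2 * ((r : ℝ) - 1) / m := by
    have : 2 * (r : ℝ) ≤ m := by exact_mod_cast hrm
    rw [sub_nonneg, div_le_one hm]
    linarith
  have hbad' : (Fintype.card V : ℝ) ≤ 2 * {x | LiesInSegmentLongerThan G m x}.ncard := by
    exact_mod_cast (not_le.1 hbad).le
  calc (1 / 2 : ℝ) * (1 - 2 * ((r : ℝ) - 1) / m) * Fintype.card V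
      ≤ (1 / 2 : ℝ) * (1 - 2 * ((r : ℝ) - 1) / m) *
          (2 * {x | LiesInSegmentLongerThan G m x}.ncard) := by gcongr
    _ = (1 - 2 * ((r : ℝ) - 1) / m) * {x | LiesInSegmentLongerThan G m x}.ncard := by ring
    _ ≤ {v | IsPathBallCenter G r v}.ncard := mul_ncard_liesInSegmentLongerThan_le hG hr hrm

theorem stmt5 {V : Type*} [Fintype V] (G : SimpleGraph V) (hG : G.IsTree)
    (m r : ℕ) (hm : 0 < m) (hr : 0 < r) (hrm : 2 * r - 1 < m)
    (hbad : ¬ IsMGood G m) :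
    (1 / 2 : ℝ) * (1 - 2 * ((r : ℝ) - 1) / (m : ℝ)) * (Fintype.card V : ℝ) ≤
      (Nat.card {v : V |
        ∃ φ : (G.induce {x : V | G.dist v x ≤ r}) ≃g SimpleGraph.pathGraph (2 * r + 1),
          φ ⟨v, by simp [SimpleGraph.dist_self]⟩ = ⟨r, by omega⟩} : ℝ) :=
  stmt5_general G hG.connected m r hr (by omega) hbad
end

section
/- Let m be a positive integer and let T be an m-good finite tree with at least two vertices. Then T has at least |T|/(4m) leaves. -/
/-!
Root `G` at a vertex of degree different from 2. From a vertex `x`, walk away from the root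
until the first vertex `b` of degree different from 2. If `x` lies in no path segment longer than
`m`, this takes fewer than `m` steps, since continuing from `x` towards the root completes a path
segment. As `x` is the vertex at distance `i < m` from `b` on the path from `b` to the root, the
vertices outside long segments, at least half of all, number at most `m` times those of degree
different from 2. By the handshake lemma, at least half of the latter are leaves.
-/

open SimpleGraph

/-- The vertices of degree different from 2, that is, those at which a path segment may end. -/
def segmentEnds {V : Type*} (G : SimpleGraph V) : Set V :=
  {v | Nat.card (G.neighborSet v) ≠ 2}

/-- The leaves of `G`, that is, its vertices of degree 1. -/
def leaves {V : Type*} (G : SimpleGraph V) : Set V :=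
  {v | Nat.card (G.neighborSet v) = 1}

section

variable {V : Type*} {G : SimpleGraph V}

lemma nontrivial_neighborSet_of_notMem_segmentEnds {v : V} (hv : v ∉ segmentEnds G) :
    (G.neighborSet v).Nontrivial := by
  have hcard : (G.neighborSet v).ncard = 2 := not_not.1 hv
  exact (Set.one_lt_ncard_iff_nontrivial_and_finite.1 (by lia)).1

lemma ncard_segmentEnds_add_two_le_two_mul_ncard_leaves [Finite V] [Nontrivial V]
    (hG : G.IsTree) : (segmentEnds G).ncard + 2 ≤ 2 * (leaves G).ncard := by
  classical
  have := Fintype.ofFinite V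
  have hdeg (v : V) : Nat.card (G.neighborSet v) = G.degree v := by
    rw [Nat.card_eq_fintype_card, card_neighborSet_eq_degree]
  have hends : (segmentEnds G).ncard = ∑ v, if G.degree v ≠ 2 then 1 else 0 := by
    rw [← Finset.card_filter, ← Set.ncard_coe_finset]
    simp only [segmentEnds, hdeg, Finset.coe_filter, Finset.mem_univ, true_and]
  have hleaves : (leaves G).ncard = ∑ v, if G.degree v = 1 then 1 else 0 := by
    rw [← Finset.card_filter, ← Set.ncard_coe_finset]
    simp only [leaves, hdeg, Finset.coe_filter, Finset.mem_univ, true_and]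
  have hpointwise (v : V) : (2 + if G.degree v ≠ 2 then 1 else 0) ≤
      G.degree v + 2 * if G.degree v = 1 then 1 else 0 := by
    have := hG.preconnected.degree_pos_of_nontrivial v
    split_ifs <;> lia
  have hsum : Fintype.card V * 2 + (segmentEnds G).ncard ≤
      ∑ v, G.degree v + 2 * (leaves G).ncard := by
    simpa only [Finset.sum_add_distrib, Finset.sum_const, Finset.card_univ, smul_eq_mul,
      ← Finset.mul_sum, ← hends, ← hleaves] using
      Finset.sum_le_sum (s := Finset.univ) fun v _ ↦ hpointwise v
  have hhandshake := G.sum_degrees_eq_twice_card_edges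
  have hedges := hG.card_edgeFinset
  lia

lemma exists_isPath_append_of_isAcyclic [Finite V] (hG : G.IsAcyclic) {S : Set V}
    (hS : ∀ v ∉ S, (G.neighborSet v).Nontrivial) {x r : V} {p : G.Walk x r} (hp : p.IsPath) :
    ∃ b ∈ S, ∃ q : G.Walk b x, (q.append p).IsPath ∧ ∀ y ∈ q.support, y ∈ S → y = b := by
  have := Fintype.ofFinite V
  induction hn : Fintype.card V - p.length using Nat.strong_induction_on generalizing x with
  | _ n ih =>
    by_cases hx : x ∈ S
    · exact ⟨x, hx, .nil, hp, fun y hy _ ↦ by simpa using hy⟩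
    obtain ⟨w, hxw, hw⟩ := (hS x hx).exists_ne p.snd
    have hwx : G.Adj w x := Adj.symm hxw
    have hwp : (Walk.cons hwx p).IsPath :=
      hp.cons fun hmem ↦ hw (hG.eq_snd_of_adj_start hp hxw hmem)
    have hlt : Fintype.card V - (Walk.cons hwx p).length < n := by
      have := hp.length_lt
      rw [Walk.length_cons]
      lia
    obtain ⟨b, hb, q, hqp, hq⟩ := ih _ hlt hwp rfl
    refine ⟨b, hb, q.concat hwx, by rwa [Walk.concat_append], fun y hy hyS ↦ ?_⟩
    rw [Walk.support_concat, List.mem_append, List.mem_singleton] at hy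
    rcases hy with hy | rfl
    · exact hq y hy hyS
    · exact absurd hyS hx

lemma exists_append_eq_forall_mem_support_eq {S : Set V} {x r : V} (p : G.Walk x r)
    (hr : r ∈ S) : ∃ c ∈ S, ∃ (p₁ : G.Walk x c) (p₂ : G.Walk c r),
      p₁.append p₂ = p ∧ ∀ y ∈ p₁.support, y ∈ S → y = c := by
  classical
  obtain ⟨c, hc, hcp, hfirst⟩ := p.exists_mem_support_forall_mem_support_imp_eq
    {y ∈ p.support.toFinset | y ∈ S} ⟨r, by simp [hr]⟩
  simp only [Finset.mem_filter, List.mem_toFinset] at hc hfirst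
  exact ⟨c, hc.2, p.takeUntil c hcp, p.dropUntil c hcp, p.take_spec hcp, fun y hy hyS ↦
    hfirst y ⟨p.support_takeUntil_subset_support hcp hy, hyS⟩ hy⟩

lemma isPathSegment_append {b x c : V} {q : G.Walk b x} {p : G.Walk x c}
    (hqp : (q.append p).IsPath) (hb : b ∈ segmentEnds G) (hc : c ∈ segmentEnds G)
    (hq : ∀ y ∈ q.support, y ∈ segmentEnds G → y = b)
    (hp : ∀ y ∈ p.support, y ∈ segmentEnds G → y = c) : IsPathSegment G (q.append p) := by
  refine ⟨hqp, hb, hc, fun y hy hyb hyc ↦ ?_⟩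
  by_contra hy_end
  rcases (Walk.mem_support_append_iff _ _).1 hy with hyq | hyp
  · exact hyb (hq y hyq hy_end)
  · exact hyc (hp y hyp hy_end)

lemma length_lt_of_not_liesInSegmentLongerThan {m : ℕ} (hm : 0 < m) {b x r : V}
    (hb : b ∈ segmentEnds G) (hr : r ∈ segmentEnds G) {q : G.Walk b x} {p : G.Walk x r}
    (hqp : (q.append p).IsPath) (hq : ∀ y ∈ q.support, y ∈ segmentEnds G → y = b)
    (hx : ¬ LiesInSegmentLongerThan G m x) : q.length < m := by
  by_contra! hmq
  have hxb : x ≠ b := by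
    rintro rfl
    have := Walk.length_eq_zero_iff.2 (Walk.isPath_iff_nil.1 hqp.of_append_left)
    lia
  obtain ⟨c, hc, p₁, p₂, rfl, hp₁⟩ := exists_append_eq_forall_mem_support_eq p hr
  have hxc : x ≠ c := by
    rintro rfl
    exact hxb (hq x q.end_mem_support hc)
  rw [Walk.append_assoc] at hqp
  have hlength : m < (q.append p₁).length := by
    have : p₁.length ≠ 0 := mt Walk.eq_of_length_eq_zero hxc
    rw [Walk.length_append]
    lia
  have hmem : x ∈ (q.append p₁).support :=
    (Walk.mem_support_append_iff _ _).2 (.inl q.end_mem_support)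
  exact hx ⟨b, c, q.append p₁, isPathSegment_append hqp.of_append_left hb hc hq hp₁, hlength,
    hmem, hxb, hxc⟩

lemma ncard_not_liesInSegmentLongerThan_le [Finite V] (hG : G.IsTree) {m : ℕ} (hm : 0 < m) :
    {x | ¬ LiesInSegmentLongerThan G m x}.ncard ≤ (segmentEnds G).ncard * m := by
  have hS (v : V) := nontrivial_neighborSet_of_notMem_segmentEnds (G := G) (v := v)
  obtain ⟨v⟩ := hG.connected.nonempty
  obtain ⟨r, hr, -⟩ := exists_isPath_append_of_isAcyclic hG.isAcyclic hS (.nil (u := v))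
  choose toRoot hpath hunique using fun v ↦ hG.existsUnique_path v r
  have hcover : {x | ¬ LiesInSegmentLongerThan G m x} ⊆
      (fun bi : V × ℕ ↦ (toRoot bi.1).getVert bi.2) '' (segmentEnds G ×ˢ Set.Iio m) := by
    intro x hx
    obtain ⟨b, hb, q, hqp, hq⟩ :=
      exists_isPath_append_of_isAcyclic hG.isAcyclic hS (hpath x)
    refine ⟨(b, q.length),
      ⟨hb, length_lt_of_not_liesInSegmentLongerThan hm hb hr hqp hq hx⟩, ?_⟩
    simp [← hunique b _ hqp, Walk.getVert_append]
  calc {x | ¬ LiesInSegmentLongerThan G m x}.ncard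
    _ ≤ (segmentEnds G ×ˢ Set.Iio m).ncard := (Set.ncard_le_ncard hcover).trans Set.ncard_image_le
    _ = (segmentEnds G).ncard * m := by rw [Set.ncard_prod, Set.ncard_Iio_nat]

lemma IsMGood.card_le_two_mul_ncard_not_liesInSegmentLongerThan [Fintype V] {m : ℕ}
    (hgood : IsMGood G m) :
    Fintype.card V ≤ 2 * {x | ¬ LiesInSegmentLongerThan G m x}.ncard := by
  have hsplit := Set.ncard_add_ncard_compl {x | LiesInSegmentLongerThan G m x}
  rw [Set.compl_ofPred, Nat.card_eq_fintype_card] at hsplit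
  rw [IsMGood, Nat.card_coe_set_eq] at hgood
  lia

end

theorem stmt6 {V : Type*} [Fintype V] (G : SimpleGraph V) (hG : G.IsTree)
    (m : ℕ) (hm : 0 < m) (h2 : 2 ≤ Fintype.card V) (hgood : IsMGood G m) :
    (Fintype.card V : ℝ) / (4 * (m : ℝ)) ≤
      (Nat.card {v : V | Nat.card (G.neighborSet v) = 1} : ℝ) := by
  have : Nontrivial V := Fintype.one_lt_card_iff_nontrivial.1 h2
  have hends : (segmentEnds G).ncard ≤ 2 * (leaves G).ncard := by
    have := ncard_segmentEnds_add_two_le_two_mul_ncard_leaves hG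
    lia
  have hcard : Fintype.card V ≤ (leaves G).ncard * (4 * m) :=
    calc Fintype.card V
      _ ≤ 2 * {x | ¬ LiesInSegmentLongerThan G m x}.ncard :=
        hgood.card_le_two_mul_ncard_not_liesInSegmentLongerThan
      _ ≤ 2 * ((segmentEnds G).ncard * m) := by
        gcongr
        exact ncard_not_liesInSegmentLongerThan_le hG hm
      _ ≤ 2 * (2 * (leaves G).ncard * m) := by gcongr
      _ = (leaves G).ncard * (4 * m) := by ring
  change _ ≤ ((leaves G).ncard : ℝ)
  rw [div_le_iff₀ (by positivity)]
  exact_mod_cast hcard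
end

section
/- For every finite tree T, the ratio log₂(N(T))/|T| lies in the interval [0,1]; moreover, the set of values {log₂(N(T))/|T| : T a finite tree} is dense in [0,1]. -/
/-- `N(T)`: the number of subtrees. -/
noncomputable def numSubtrees {V : Type*} [Fintype V] (G : SimpleGraph V) : ℕ :=
  Nat.card {S : Finset V // IsSubtree G S}

/-!
A vertex of degree `k` is the centre of `2 ^ k` stars, so it forces at least `2 ^ k` subtrees. A
broom, which is a path with `k` further leaves attached to its first vertex, has few others: a
subtree is determined by its leaves and by the interval it cuts out of the path. With `n` vertices,
`log₂ N = k + O(log n)`, and so the density of leaves `k / n`, which can approach any number in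
`[0, 1]`, is the limit of the ratio.
-/

open Filter Finset SimpleGraph Topology

section Subtrees

variable {V : Type*} {G : SimpleGraph V}

theorem isSubtree_insert_of_forall_adj [DecidableEq V] {v : V} {L : Finset V}
    (hL : ∀ w ∈ L, G.Adj v w) : IsSubtree G (insert v L) := by
  refine ⟨insert_nonempty v L, (connected_iff_exists_forall_reachable _).2
    ⟨⟨v, mem_insert_self v L⟩, fun ⟨w, hw⟩ => ?_⟩⟩
  rcases mem_insert.1 hw with rfl | hw
  · exact Reachable.refl _
  · exact Adj.reachable (hL w hw)

theorem IsSubtree.exists_adj_of_mem_of_notMem {S : Finset V} (hS : IsSubtree G S) {P : Set V}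
    {a b : V} (haS : a ∈ S) (hbS : b ∈ S) (ha : a ∈ P) (hb : b ∉ P) :
    ∃ x ∈ S, ∃ y ∈ S, G.Adj x y ∧ x ∈ P ∧ y ∉ P := by
  obtain ⟨w⟩ := hS.2.preconnected ⟨a, haS⟩ ⟨b, hbS⟩
  obtain ⟨d, -, hx, hy⟩ := w.exists_boundary_dart {z | z.1 ∈ P} ha hb
  exact ⟨d.fst, d.fst.2, d.snd, d.snd.2, d.adj, hx, hy⟩

variable [Fintype V]

theorem numSubtrees_le_two_pow_card (G : SimpleGraph V) :
    numSubtrees G ≤ 2 ^ Fintype.card V := by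
  simpa [numSubtrees] using Finite.card_subtype_le (IsSubtree G)

theorem two_pow_degree_le_numSubtrees (G : SimpleGraph V) (v : V) [Fintype (G.neighborSet v)] :
    2 ^ G.degree v ≤ numSubtrees G := by
  classical
  have hstar (L : (G.neighborFinset v).powerset) : IsSubtree G (insert v L.1) :=
    isSubtree_insert_of_forall_adj fun w hw =>
      (G.mem_neighborFinset v w).1 (mem_powerset.1 L.2 hw)
  have hv (L : (G.neighborFinset v).powerset) : v ∉ L.1 := fun h =>
    G.notMem_neighborFinset_self v (mem_powerset.1 L.2 h)
  have hinj : Function.Injective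
      fun L => (⟨insert v L.1, hstar L⟩ : {S : Finset V // IsSubtree G S}) := fun L L' h =>
    Subtype.ext (insert_erase_invOn.2.injOn (hv L) (hv L') (Subtype.ext_iff.1 h))
  calc 2 ^ G.degree v = Nat.card (G.neighborFinset v).powerset := by
        rw [Nat.card_eq_finsetCard, card_powerset, card_neighborFinset_eq_degree]
    _ ≤ numSubtrees G := Nat.card_le_card_of_injective _ hinj

theorem numSubtrees_pos [Nonempty V] (G : SimpleGraph V) : 0 < numSubtrees G := by
  classical
  exact Nat.one_le_two_pow.trans (two_pow_degree_le_numSubtrees G (Classical.arbitrary V))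

/-- The ratio `log₂ (N(G)) / |G|`: for nonempty `G`, the number `e` with `N(G) = 2 ^ (e * |G|)`. -/
noncomputable def subtreeExponent (G : SimpleGraph V) : ℝ :=
  Real.logb 2 (numSubtrees G) / Fintype.card V

theorem subtreeExponent_mem_Icc [Nonempty V] (G : SimpleGraph V) :
    subtreeExponent G ∈ Set.Icc (0 : ℝ) 1 := by
  have hpos : (1 : ℝ) ≤ numSubtrees G := by exact_mod_cast numSubtrees_pos G
  refine ⟨div_nonneg (Real.logb_nonneg one_lt_two hpos) (Nat.cast_nonneg _),
    div_le_one_of_le₀ ?_ (Nat.cast_nonneg _)⟩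
  rw [Real.logb_le_iff_le_rpow one_lt_two (by positivity), Real.rpow_natCast]
  exact_mod_cast numSubtrees_le_two_pow_card G

end Subtrees

section ParentGraph

variable {V : Type*}

/-- The graph joining every vertex `v` to its parent `p v`. A root is encoded as a vertex that is
its own parent, since `SimpleGraph.fromRel` discards loops. -/
def parentGraph (p : V → V) : SimpleGraph V := fromRel fun u v => p u = v

theorem parentGraph_adj_parent {p : V → V} {v : V} (h : p v ≠ v) :
    (parentGraph p).Adj v (p v) :=
  (fromRel_adj _ _ _).2 ⟨h.symm, Or.inl rfl⟩

theorem edgeSet_parentGraph (p : V → V) :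
    (parentGraph p).edgeSet = (fun v => s(v, p v)) '' {v | p v ≠ v} := by
  ext e
  induction e using Sym2.ind with
  | _ u v =>
    simp only [parentGraph, mem_edgeSet, fromRel_adj, Set.mem_image, Set.mem_ofPred_eq]
    grind

theorem parentGraph_connected [Preorder V] [OrderBot V] [WellFoundedLT V] {p : V → V}
    (hp : ∀ v ≠ ⊥, p v < v) : (parentGraph p).Connected := by
  refine (connected_iff_exists_forall_reachable _).2 ⟨⊥, fun v => ?_⟩
  induction v using WellFoundedLT.induction with
  | _ v ih =>
    by_cases hv : v = ⊥
    · exact hv ▸ Reachable.refl _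
    · exact (ih _ (hp v hv)).trans (parentGraph_adj_parent (hp v hv).ne).symm.reachable

theorem parentGraph_isTree [Preorder V] [OrderBot V] [Finite V] {p : V → V}
    (hbot : p ⊥ = ⊥) (hp : ∀ v ≠ ⊥, p v < v) : (parentGraph p).IsTree := by
  have hconn := parentGraph_connected hp
  have hedges : (parentGraph p).edgeSet.ncard ≤ ({⊥}ᶜ : Set V).ncard := by
    rw [edgeSet_parentGraph]
    refine (Set.ncard_image_le).trans (Set.ncard_le_ncard ?_)
    rintro v hv rfl
    exact hv hbot
  have hcompl := Set.ncard_add_ncard_compl ({⊥} : Set V)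
  rw [Set.ncard_singleton] at hcompl
  refine isTree_iff_connected_and_card.2
    ⟨hconn, le_antisymm ?_ hconn.card_vert_le_card_edgeSet_add_one⟩
  rw [Nat.card_coe_set_eq]
  omega

end ParentGraph

section OrdConnected

variable {α : Type*} [LinearOrder α] [LocallyFiniteOrder α]

theorem eq_Icc_min'_max'_of_ordConnected {S : Finset α} (hS : (S : Set α).OrdConnected)
    (hne : S.Nonempty) : S = Icc (S.min' hne) (S.max' hne) :=
  Subset.antisymm (fun _ hx => mem_Icc.2 ⟨S.min'_le _ hx, S.le_max' _ hx⟩) fun _ hx =>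
    hS.out (S.min'_mem hne) (S.max'_mem hne) (mem_Icc.1 hx)

theorem card_ordConnected_finset_le [Fintype α] :
    Nat.card {S : Finset α // (S : Set α).OrdConnected} ≤ Fintype.card α ^ 2 + 1 := by
  let intervals : Finset (Finset α) := univ.image fun p : α × α => Icc p.1 p.2
  have hsub (S : {S : Finset α // (S : Set α).OrdConnected}) : S.1 ∈ insert ∅ intervals := by
    rcases S.1.eq_empty_or_nonempty with h | h
    · exact mem_insert.2 (Or.inl h)
    · exact mem_insert_of_mem
        (mem_image.2 ⟨(_, _), mem_univ _, (eq_Icc_min'_max'_of_ordConnected S.2 h).symm⟩)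
  calc Nat.card {S : Finset α // (S : Set α).OrdConnected}
      ≤ Nat.card (insert ∅ intervals : Finset (Finset α)) :=
        Nat.card_le_card_of_injective (fun S => ⟨S.1, hsub S⟩) fun _ _ h =>
          Subtype.ext (congrArg (·.1) h)
    _ = #(insert ∅ intervals) := Nat.card_eq_finsetCard _
    _ ≤ #intervals + 1 := card_insert_le _ _
    _ ≤ Fintype.card α ^ 2 + 1 := by
        grw [card_image_le, card_univ, Fintype.card_prod, sq]

end OrdConnected

section Broom

variable {V : Type*} [LinearOrder V] [OrderBot V] [PredOrder V]

/-- The parent function of `broom c`. It fixes the root `⊥`, because `Order.pred ⊥ = ⊥`. -/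
def broomParent (c v : V) : V := if v ≤ c then Order.pred v else ⊥

/-- The broom with handle `Set.Iic c`: the vertices up to `c` form a path in increasing order, and
the vertices above `c` are leaves attached to its first vertex `⊥`. -/
def broom (c : V) : SimpleGraph V := parentGraph (broomParent c)

theorem broomParent_lt (c : V) {v : V} (hv : v ≠ ⊥) : broomParent c v < v := by
  unfold broomParent
  split_ifs
  · exact Order.pred_lt_of_not_isMin (isMin_iff_eq_bot.not.2 hv)
  · exact bot_lt_iff_ne_bot.2 hv

theorem broom_isTree [Finite V] (c : V) : (broom c).IsTree :=
  parentGraph_isTree (by simp [broomParent]) fun _ => broomParent_lt c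

theorem broom_adj_bot_of_lt {c v : V} (hv : c < v) : (broom c).Adj ⊥ v := by
  have hparent : broomParent c v = ⊥ := if_neg hv.not_ge
  have hne : v ≠ ⊥ := (bot_le.trans_lt hv).ne'
  exact hparent ▸ (parentGraph_adj_parent (broomParent_lt c hne).ne).symm

theorem eq_of_broom_adj_of_mem_Ioc_of_notMem_Ioc {b c x y : V} (hxy : (broom c).Adj x y)
    (hx : x ∈ Set.Ioc b c) (hy : y ∉ Set.Ioc b c) : y = b := by
  obtain ⟨hbx, hxc⟩ := hx
  rcases ((fromRel_adj _ _ _).1 hxy).2 with h | h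
  · rw [broomParent, if_pos hxc] at h
    have hby : b ≤ y := h ▸ Order.le_pred_of_lt hbx
    have hyc : y ≤ c := h ▸ (Order.pred_le x).trans hxc
    exact (hby.eq_or_lt.resolve_right fun hlt => hy ⟨hlt, hyc⟩).symm
  · have hyc : y ≤ c := not_lt.1 fun hlt => by
      rw [broomParent, if_neg hlt.not_ge] at h
      exact (h ▸ hbx).not_ge bot_le
    rw [broomParent, if_pos hyc] at h
    exact absurd ⟨hbx.trans_le (h ▸ Order.pred_le y), hyc⟩ hy

theorem IsSubtree.ordConnected_inter_Iic {c : V} {S : Finset V} (hS : IsSubtree (broom c) S) :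
    (S ∩ Set.Iic c : Set V).OrdConnected := by
  refine ⟨fun a ha d hd b hb => ⟨?_, hb.2.trans hd.2⟩⟩
  by_contra hbS
  have hbd : b < d := hb.2.lt_of_ne fun h => hbS (h ▸ hd.1)
  -- A walk can leave the part of the handle above `b` only through `b`.
  obtain ⟨x, -, y, hyS, hxy, hx, hy⟩ := hS.exists_adj_of_mem_of_notMem (P := Set.Ioc b c)
    hd.1 ha.1 ⟨hbd, hd.2⟩ fun h => h.1.not_ge hb.1
  exact hbS (eq_of_broom_adj_of_mem_Ioc_of_notMem_Ioc hxy hx hy ▸ hyS)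

variable [Fintype V] [LocallyFiniteOrderTop V]

theorem two_pow_card_Ioi_le_numSubtrees_broom (c : V) :
    2 ^ #(Ioi c) ≤ numSubtrees (broom c) := by
  classical
  have hsub : Ioi c ⊆ (broom c).neighborFinset ⊥ := fun v hv =>
    (mem_neighborFinset _ _ _).2 (broom_adj_bot_of_lt (mem_Ioi.1 hv))
  exact (Nat.pow_le_pow_right two_pos (card_le_card hsub)).trans
    (two_pow_degree_le_numSubtrees _ ⊥)

theorem le_subtreeExponent_broom (c : V) :
    (#(Ioi c) : ℝ) / Fintype.card V ≤ subtreeExponent (broom c) := by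
  unfold subtreeExponent
  gcongr
  rw [Real.le_logb_iff_rpow_le one_lt_two (by exact_mod_cast numSubtrees_pos _),
    Real.rpow_natCast]
  exact_mod_cast two_pow_card_Ioi_le_numSubtrees_broom c

variable [LocallyFiniteOrder V]

theorem numSubtrees_broom_le (c : V) :
    numSubtrees (broom c) ≤ 2 ^ #(Ioi c) * (Fintype.card V ^ 2 + 1) := by
  let split (S : {S : Finset V // IsSubtree (broom c) S}) :
      (Ioi c).powerset × {S : Finset V // (S : Set V).OrdConnected} :=
    (⟨S.1.filter (c < ·), mem_powerset.2 fun v hv => mem_Ioi.2 (mem_filter.1 hv).2⟩,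
      ⟨S.1.filter (· ≤ c), by
        simpa [Set.inter_def] using S.2.ordConnected_inter_Iic⟩)
  have hinj : Function.Injective split := fun S S' h => by
    obtain ⟨habove, hbelow⟩ := Prod.ext_iff.1 h
    have h₁ := Subtype.ext_iff.1 habove
    have h₂ := Subtype.ext_iff.1 hbelow
    ext v
    rcases lt_or_ge c v with hv | hv
    · simpa [split, hv] using Finset.ext_iff.1 h₁ v
    · simpa [split, hv] using Finset.ext_iff.1 h₂ v
  calc numSubtrees (broom c)
      ≤ Nat.card ((Ioi c).powerset × {S : Finset V // (S : Set V).OrdConnected}) :=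
        Nat.card_le_card_of_injective split hinj
    _ = 2 ^ #(Ioi c) * Nat.card {S : Finset V // (S : Set V).OrdConnected} := by
        rw [Nat.card_prod, Nat.card_eq_finsetCard, card_powerset]
    _ ≤ 2 ^ #(Ioi c) * (Fintype.card V ^ 2 + 1) :=
        Nat.mul_le_mul_left _ card_ordConnected_finset_le

theorem subtreeExponent_broom_le (c : V) :
    subtreeExponent (broom c) ≤
      (#(Ioi c) + (1 + 2 * Real.logb 2 (Fintype.card V))) / Fintype.card V := by
  have hcard : (1 : ℝ) ≤ Fintype.card V := by exact_mod_cast Fintype.card_pos (α := V)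
  unfold subtreeExponent
  gcongr
  calc Real.logb 2 (numSubtrees (broom c))
      ≤ Real.logb 2 (2 ^ #(Ioi c) * (2 * (Fintype.card V : ℝ) ^ 2)) := by
        gcongr
        · exact one_lt_two
        · exact_mod_cast numSubtrees_pos _
        · calc (numSubtrees (broom c) : ℝ)
              ≤ 2 ^ #(Ioi c) * ((Fintype.card V : ℝ) ^ 2 + 1) := by
                exact_mod_cast numSubtrees_broom_le c
            _ ≤ 2 ^ #(Ioi c) * (2 * (Fintype.card V : ℝ) ^ 2) := by
                gcongr
                nlinarith
    _ = #(Ioi c) + (1 + 2 * Real.logb 2 (Fintype.card V)) := by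
        rw [Real.logb_mul (by positivity) (by positivity),
          Real.logb_mul two_ne_zero (by positivity), Real.logb_pow, Real.logb_pow,
          Real.logb_self_eq_one one_lt_two, mul_one, Nat.cast_ofNat]

end Broom

section Density

theorem tendsto_natCast_add_one_atTop : Tendsto (fun n : ℕ => (n : ℝ) + 1) atTop atTop :=
  tendsto_atTop_add_const_right _ _ tendsto_natCast_atTop_atTop

theorem tendsto_subtreeExponent_broom {c : ∀ n : ℕ, Fin (n + 1)} {x : ℝ}
    (hc : Tendsto (fun n => (#(Ioi (c n)) : ℝ) / (n + 1)) atTop (𝓝 x)) :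
    Tendsto (fun n => subtreeExponent (broom (c n))) atTop (𝓝 x) := by
  have hlog : Tendsto (fun N : ℝ => (1 + 2 * Real.logb 2 N) / N) atTop (𝓝 0) := by
    have hinv : Tendsto (fun N : ℝ => 1 / N) atTop (𝓝 0) := by
      simpa only [one_div] using tendsto_inv_atTop_zero
    have hlogb : Tendsto (fun N : ℝ => Real.logb 2 N / N) atTop (𝓝 0) := by
      simpa using Real.tendsto_pow_logb_div_mul_add_atTop (b := 2) 1 0 1 one_ne_zero
    simpa [add_div, mul_div_assoc] using hinv.add (hlogb.const_mul 2)
  refine tendsto_of_tendsto_of_tendsto_of_le_of_le hc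
    (by simpa using hc.add (hlog.comp tendsto_natCast_add_one_atTop)) (fun n => ?_) fun n => ?_
  · simpa using le_subtreeExponent_broom (c n)
  · simpa [add_div] using subtreeExponent_broom_le (c n)

theorem exists_tendsto_card_Ioi_div {x : ℝ} (hx : x ∈ Set.Ico (0 : ℝ) 1) :
    ∃ c : ∀ n : ℕ, Fin (n + 1),
      Tendsto (fun n => (#(Ioi (c n)) : ℝ) / (n + 1)) atTop (𝓝 x) := by
  have hfloor (n : ℕ) : ⌊x * (n + 1 : ℝ)⌋₊ < n + 1 := by
    rw [Nat.floor_lt (by have := hx.1; positivity)]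
    push_cast
    exact mul_lt_of_lt_one_left (by positivity) hx.2
  refine ⟨fun n => Fin.rev ⟨_, hfloor n⟩, ?_⟩
  refine ((tendsto_nat_floor_mul_div_atTop hx.1).comp
    tendsto_natCast_add_one_atTop).congr fun n => ?_
  have hcard : #(Ioi (Fin.rev ⟨_, hfloor n⟩)) = ⌊x * (n + 1 : ℝ)⌋₊ := by
    rw [Fin.card_Ioi, Fin.val_rev, Fin.val_mk]
    have := hfloor n
    omega
  rw [hcard, Function.comp_apply]

theorem Icc_subset_closure_subtreeExponent :
    Set.Icc (0 : ℝ) 1 ⊆ closure {x : ℝ | ∃ (n : ℕ) (G : SimpleGraph (Fin n)), G.IsTree ∧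
      x = subtreeExponent G} := by
  rw [← closure_Ico zero_ne_one]
  refine closure_minimal (fun x hx => ?_) isClosed_closure
  obtain ⟨c, hc⟩ := exists_tendsto_card_Ioi_div hx
  exact mem_closure_of_tendsto (tendsto_subtreeExponent_broom hc)
    (Eventually.of_forall fun n => ⟨n + 1, _, broom_isTree (c n), rfl⟩)

end Density

theorem stmt7_general :
    (∀ (V : Type*) [Fintype V] [Nonempty V] (G : SimpleGraph V),
      Real.logb 2 (numSubtrees G : ℝ) / (Fintype.card V : ℝ) ∈ Set.Icc (0 : ℝ) 1) ∧
    closure {x : ℝ | ∃ (n : ℕ) (G : SimpleGraph (Fin n)), G.IsTree ∧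
      x = Real.logb 2 (numSubtrees G : ℝ) / (n : ℝ)} = Set.Icc (0 : ℝ) 1 := by
  refine ⟨fun V _ _ G => subtreeExponent_mem_Icc G, Set.Subset.antisymm ?_ ?_⟩
  · refine closure_minimal ?_ isClosed_Icc
    rintro _ ⟨n, G, hG, rfl⟩
    have := hG.connected.nonempty
    simpa [subtreeExponent] using subtreeExponent_mem_Icc G
  · simpa [subtreeExponent] using Icc_subset_closure_subtreeExponent

theorem stmt7 :
    (∀ (n : ℕ) (G : SimpleGraph (Fin n)), G.IsTree →
      Real.logb 2 (numSubtrees G : ℝ) / (n : ℝ) ∈ Set.Icc (0 : ℝ) 1) ∧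
    closure {x : ℝ | ∃ (n : ℕ) (G : SimpleGraph (Fin n)), G.IsTree ∧
      x = Real.logb 2 (numSubtrees G : ℝ) / (n : ℝ)} = Set.Icc (0 : ℝ) 1 := by
  obtain ⟨hmem, hclosure⟩ := stmt7_general.{0}
  exact ⟨fun n G hG => by simpa using @hmem (Fin n) _ hG.connected.nonempty G, hclosure⟩
end
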